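/- The partial sums of the Kontsevich-Zagier series satisfy: for all positive integers s, N and every residue i in {0,...,s-1} that is not congruent mod s to any pentagonal number m(3m+1)/2 with m ∈ ℤ, the q-factorial (q;q)_{⌊(N+1)/s⌋} divides the polynomial A_s(N,i,q), where F(q;N) = ∑_{n=0}^N (q;q)_n = ∑_{i=0}^{s-1} q^i A_s(N,i,q^s). -/

import Mathlib

open Polynomial Finset

/-- The q-Pochhammer symbol `(q;q)_n` as a polynomial over `ℤ`. -/
noncomputable def qPoch (n : ℕ) : ℤ[X] := ∏ j ∈ Finset.range n, (1 - X ^ (j + 1))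

/-!
For `S(y) = ∑_{n ≤ N} (yq;q)_n y^n` one has `F(q;N) = S(1)` and, as soon as `(yq;q)_{N+1} = 0`,
`(1 - y) S(y) = 1 - y²q - y³q² (1 - yq) S(yq)`. Iterating `m` times writes `(1 - x) S(x)` as a
combination of powers of `q` with pentagonal exponents plus a remainder in `(1 - xq^m) S(xq^m)`.
Let `v = q^s` be a root of `(v;v)_M` and `ℓ` the `i`-th component of the dissection: `ℓ` kills the
pentagonal powers, so only the remainder survives. Since `v^{M!}` is unipotent, after `m = 2LB`
steps with `L = s M!` this remainder is `x^{6LB}` times a polynomial in `B`, while the total does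
not depend on `B`; finite differences give `(1 - x^{6L})^{2M+1} ℓ((1 - x) S(x)) = 0`.
Putting `x = 1 - z` with `z` nilpotent and reading off the lowest order in `z` yields
`(6L)^{2M+1} ℓ(F(q;N)) = 0`, and the integer factor cancels because `(v;v)_M` is primitive.
-/

open scoped fwdDiff

section ForwardDifferences

lemma fwdDiff_iter_smul_const {M R W : Type*} [AddCommMonoid M] [Ring R] [AddCommGroup W]
    [Module R W] (h : M) (f : M → R) (c : W) (n : ℕ) :
    (Δ_[h])^[n] (fun y ↦ f y • c) = fun y ↦ (Δ_[h])^[n] f y • c := by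
  induction n generalizing f with
  | zero => rfl
  | succ n ih =>
    rw [Function.iterate_succ_apply, Function.iterate_succ_apply, fwdDiff_smul_const]
    exact ih (Δ_[h] f)

lemma fwdDiff_iter_choose_eq_zero {Q : ℚ[X]} {m : ℕ → ℕ} (hQ : ∀ B : ℕ, Q.eval (B : ℚ) = m B)
    {k n : ℕ} (hn : Q.natDegree * k < n) :
    (Δ_[1])^[n] (fun B ↦ ((m B).choose k : ℤ)) = 0 := by
  set P : ℚ[X] := C (k.factorial : ℚ)⁻¹ * (descPochhammer ℚ k).comp Q with hP
  have hdeg : P.natDegree < n := by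
    refine ((natDegree_C_mul_le _ _).trans natDegree_comp_le).trans_lt ?_
    rwa [descPochhammer_natDegree, mul_comm]
  have heval (B : ℕ) : P.eval (B : ℚ) = ((m B).choose k : ℚ) := by
    rw [Nat.cast_choose_eq_descPochhammer_div, hP, eval_mul, eval_C, eval_comp, hQ, div_eq_inv_mul]
  ext B
  have h := congrFun (Polynomial.fwdDiff_iter_eq_zero_of_degree_lt hdeg) (B : ℚ)
  rw [fwdDiff_iter_eq_sum_shift] at h ⊢
  have hshift (j : ℕ) : P.eval ((B : ℚ) + j • 1) = ((m (B + j • 1)).choose k : ℚ) := by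
    rw [← heval]; simp
  simp only [hshift, Pi.zero_apply] at h ⊢
  exact Int.cast_injective (α := ℚ) (by simpa [zsmul_eq_mul] using h)

lemma pow_eq_sum_choose_smul {R : Type*} [CommRing R] {w : R} {M : ℕ} (hw : (w - 1) ^ M = 0)
    (m : ℕ) : w ^ m = ∑ k ∈ range M, (m.choose k : ℤ) • (w - 1) ^ k := by
  set u : ℕ → R := fun k ↦ (m.choose k : ℤ) • (w - 1) ^ k
  have h_choose : ∀ k ≥ m + 1, u k = 0 := fun k hk ↦ by
    simp [u, Nat.choose_eq_zero_of_lt (Nat.lt_of_succ_le hk)]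
  have h_pow : ∀ k ≥ M, u k = 0 := fun k hk ↦ by simp [u, pow_eq_zero_of_le hk hw]
  calc w ^ m = (w - 1 + 1) ^ m := by rw [sub_add_cancel]
    _ = ∑ k ∈ range (m + 1), u k := by rw [add_pow]; simp [u, mul_comm]
    _ = ∑ k ∈ range (m + 1 + M), u k := (eventually_constant_sum h_choose (by lia)).symm
    _ = ∑ k ∈ range M, u k := eventually_constant_sum h_pow (by lia)

variable {R W : Type*} [CommRing R] [AddCommGroup W] [Module R W]

lemma fwdDiff_iter_pow_smul_eq_zero {w : R} {M : ℕ} (hw : (w - 1) ^ M = 0) {Q : ℚ[X]}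
    {m : ℕ → ℕ} (hQ : ∀ B : ℕ, Q.eval (B : ℚ) = m B) {n : ℕ} (hn : Q.natDegree * M < n) (c : W) :
    (Δ_[1])^[n] (fun B ↦ w ^ m B • c) = 0 := by
  have hexpand : (fun B ↦ w ^ m B • c) =
      ∑ k ∈ range M, fun B ↦ ((m B).choose k : ℤ) • ((w - 1) ^ k • c) := by
    ext B
    simp only [pow_eq_sum_choose_smul hw (m B), sum_smul, Finset.sum_apply, smul_assoc]
  rw [hexpand, fwdDiff_iter_finsetSum]
  refine sum_eq_zero fun k hk ↦ ?_
  have hkn : Q.natDegree * k < n :=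
    (Nat.mul_le_mul_left _ (mem_range.1 hk).le).trans_lt hn
  rw [fwdDiff_iter_smul_const, fwdDiff_iter_choose_eq_zero hQ hkn]
  simp only [Pi.zero_apply, zero_smul]
  rfl

lemma pow_smul_fwdDiff_iter {u : R} {f : ℕ → W} {g : W} (h : ∀ B, u ^ B • f B = g) (n B : ℕ) :
    u ^ (n + B) • (Δ_[1])^[n] f B = (1 - u) ^ n • g := by
  induction n generalizing B with
  | zero => simpa using h B
  | succ n ih =>
    rw [Function.iterate_succ_apply', fwdDiff, smul_sub]
    calc u ^ (n + 1 + B) • (Δ_[1])^[n] f (B + 1) - u ^ (n + 1 + B) • (Δ_[1])^[n] f B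
        = u ^ (n + (B + 1)) • (Δ_[1])^[n] f (B + 1) - u • u ^ (n + B) • (Δ_[1])^[n] f B := by
          rw [smul_smul, ← pow_succ', add_right_comm, add_assoc]
      _ = (1 - u) ^ (n + 1) • g := by
          rw [ih, ih, pow_succ', mul_smul, sub_smul, one_smul]

end ForwardDifferences

section QPochhammer

variable {R S : Type*} [CommRing R] [CommRing S]

/-- The `q`-Pochhammer symbol `(a;q)_n = (1 - a)(1 - aq)⋯(1 - aq^(n-1))` at arbitrary elements of
a commutative ring. -/
def qPochhammer (a q : R) (n : ℕ) : R := ∏ j ∈ range n, (1 - a * q ^ j)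

lemma map_qPochhammer (f : R →+* S) (a q : R) (n : ℕ) :
    f (qPochhammer a q n) = qPochhammer (f a) (f q) n := by
  simp [qPochhammer]

lemma map_qPoch (φ : ℤ[X] →+* R) (n : ℕ) : φ (qPoch n) = qPochhammer (φ X) (φ X) n := by
  simp [qPoch, qPochhammer, pow_succ']

lemma qPochhammer_add (a q : R) (m n : ℕ) :
    qPochhammer a q (m + n) = qPochhammer a q m * qPochhammer (a * q ^ m) q n := by
  simp only [qPochhammer, prod_range_add, pow_add, mul_assoc]

lemma qPochhammer_succ (a q : R) (n : ℕ) :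
    qPochhammer a q (n + 1) = qPochhammer a q n * (1 - a * q ^ n) :=
  prod_range_succ _ n

lemma qPochhammer_succ' (a q : R) (n : ℕ) :
    qPochhammer a q (n + 1) = (1 - a) * qPochhammer (a * q) q n := by
  rw [add_comm, qPochhammer_add]
  simp [qPochhammer]

lemma qPochhammer_eq_zero_of_le {a q : R} {m n : ℕ} (h : qPochhammer a q m = 0) (hmn : m ≤ n) :
    qPochhammer a q n = 0 := by
  obtain ⟨k, rfl⟩ := Nat.exists_eq_add_of_le hmn
  rw [qPochhammer_add, h, zero_mul]

lemma qPochhammer_pow_dvd (q : R) {s : ℕ} (hs : 0 < s) (M : ℕ) :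
    qPochhammer (q ^ s) (q ^ s) M ∣ qPochhammer q q (s * M) := by
  induction M with
  | zero => simp [qPochhammer]
  | succ M ih =>
    rw [qPochhammer_succ, Nat.mul_succ, qPochhammer_add]
    refine mul_dvd_mul ih ?_
    obtain ⟨t, rfl⟩ := Nat.exists_eq_add_of_lt hs
    refine (dvd_of_eq ?_).trans (dvd_prod_of_mem _ (self_mem_range_succ (0 + t)))
    ring

lemma pow_factorial_sub_one_pow_eq_zero {v : R} {M : ℕ} (hv : qPochhammer v v M = 0) :
    (v ^ M.factorial - 1) ^ M = 0 := by
  have hdvd : qPochhammer v v M ∣ ∏ j ∈ range M, (v ^ M.factorial - 1) := by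
    refine prod_dvd_prod_of_dvd _ _ fun j hj ↦ ?_
    rw [← pow_succ', ← neg_sub, neg_dvd]
    exact dvd_pow_sub_one_of_dvd (Nat.dvd_factorial j.succ_pos (mem_range.1 hj))
  simpa [hv] using hdvd

lemma qPochhammer_mul_pow_mem (x q : R) {L : ℕ} (hL : 0 < L) (a : ℕ) :
    qPochhammer (x * q ^ a) q L ∈ Ideal.span {1 - x} ⊔ Ideal.span {q ^ L - 1} := by
  obtain ⟨j, hj, c, hc⟩ : ∃ j < L, L ∣ a + j := by
    have hdiv := Nat.div_add_mod (a + L - 1) L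
    have hmod := Nat.mod_lt (a + L - 1) hL
    exact ⟨L * ((a + L - 1) / L) - a, by lia, (a + L - 1) / L, by lia⟩
  have hfactor : 1 - x * q ^ a * q ^ j = (1 - x) + -x * ((q ^ L) ^ c - 1) := by
    rw [← pow_mul, ← hc, pow_add]; ring
  refine Ideal.mem_of_dvd _ (dvd_prod_of_mem _ (mem_range.2 hj)) ?_
  rw [hfactor]
  exact Submodule.add_mem_sup (Ideal.mem_span_singleton_self _) (Ideal.mul_mem_left _ _
    (Ideal.mem_span_singleton.2 (sub_one_dvd_pow_sub_one _ _)))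

lemma qPochhammer_mul_pow_mem_pow (x q : R) {L : ℕ} (hL : 0 < L) (r a : ℕ) :
    qPochhammer (x * q ^ a) q (L * r) ∈ (Ideal.span {1 - x} ⊔ Ideal.span {q ^ L - 1}) ^ r := by
  induction r generalizing a with
  | zero => simp
  | succ r ih =>
    rw [Nat.mul_succ, add_comm (L * r), qPochhammer_add, mul_assoc x, ← pow_add, pow_succ']
    exact Ideal.mul_mem_mul (qPochhammer_mul_pow_mem x q hL a) (ih _)

lemma qPochhammer_mul_pow_eq_zero {x q : R} {L e M : ℕ} (hL : 0 < L) (hx : (1 - x) ^ e = 0)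
    (hq : (q ^ L - 1) ^ M = 0) (a : ℕ) : qPochhammer (x * q ^ a) q (L * (e + M)) = 0 := by
  have h := Ideal.sup_pow_add_le_pow_sup_pow (qPochhammer_mul_pow_mem_pow x q hL (e + M) a)
  simpa [Ideal.span_singleton_pow, hx, hq] using h

end QPochhammer

section KontsevichZagierSum

variable {R S : Type*} [CommRing R] [CommRing S]

/-- The partial sum `∑_{n ≤ N} (yq;q)_n y^n` of the two-variable deformation of the
Kontsevich-Zagier series; its value at `y = 1` is `F(q;N)`. -/
def kontsevichZagierSum (q : R) (N : ℕ) (y : R) : R :=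
  ∑ n ∈ range (N + 1), qPochhammer (y * q) q n * y ^ n

lemma map_kontsevichZagierSum (f : R →+* S) (q : R) (N : ℕ) (y : R) :
    f (kontsevichZagierSum q N y) = kontsevichZagierSum (f q) N (f y) := by
  simp [kontsevichZagierSum, map_qPochhammer]

lemma kontsevichZagierSum_one (q : R) (N : ℕ) :
    kontsevichZagierSum q N 1 = ∑ n ∈ range (N + 1), qPochhammer q q n := by
  simp [kontsevichZagierSum]

lemma eval_kontsevichZagierSum (q : R) (N : ℕ) (y : R) :
    (kontsevichZagierSum (C q) N X).eval y = kontsevichZagierSum q N y := by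
  rw [← coe_evalRingHom, map_kontsevichZagierSum, coe_evalRingHom, eval_C, eval_X]

lemma sub_dvd_kontsevichZagierSum_sub (q : R) (N : ℕ) (x y : R) :
    x - y ∣ kontsevichZagierSum q N x - kontsevichZagierSum q N y := by
  have h := sub_dvd_eval_sub x y (kontsevichZagierSum (C q) N X)
  simpa only [eval_kontsevichZagierSum] using h

lemma one_sub_mul_sum_qPochhammer_mul_pow (q y : R) (m : ℕ) :
    (1 - y) * ∑ n ∈ range m, qPochhammer (y * q) q n * y ^ n =
      1 - y ^ 2 * q * ∑ n ∈ range m, qPochhammer (y * q) q n * (y * q) ^ n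
        - qPochhammer (y * q) q m * y ^ m := by
  induction m with
  | zero => simp [qPochhammer]
  | succ m ih =>
    rw [sum_range_succ, sum_range_succ, mul_add, ih, qPochhammer_succ]
    ring

lemma one_sub_mul_kontsevichZagierSum {q y : R} {N : ℕ} (h : qPochhammer (y * q) q (N + 1) = 0) :
    (1 - y) * kontsevichZagierSum q N y =
      1 - y ^ 2 * q - y ^ 3 * q ^ 2 * ((1 - y * q) * kontsevichZagierSum q N (y * q)) := by
  have hshift : ∑ n ∈ range (N + 1), qPochhammer (y * q) q n * (y * q) ^ n =
      1 + y * q * ((1 - y * q) * kontsevichZagierSum q N (y * q)) := by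
    calc _ = ∑ n ∈ range (N + 2), qPochhammer (y * q) q n * (y * q) ^ n := by
          rw [sum_range_succ _ (N + 1), h, zero_mul, add_zero]
      _ = _ := by
          rw [sum_range_succ', kontsevichZagierSum, mul_sum, mul_sum, add_comm]
          congr 1
          · simp [qPochhammer]
          · refine sum_congr rfl fun n _ ↦ ?_
            rw [qPochhammer_succ']
            ring
  rw [kontsevichZagierSum, one_sub_mul_sum_qPochhammer_mul_pow, hshift, h]
  ring

lemma pentagonal_neg_add_one (j : ℕ) :
    pentagonal (-(j + 1 : ℕ)) = pentagonal (-j) + (3 * j + 2) := by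
  have h₁ := two_mul_natCast_pentagonal_neg (j + 1 : ℕ)
  have h₂ := two_mul_natCast_pentagonal_neg j
  push_cast at h₁
  zify
  linarith

lemma pentagonal_add_one (j : ℕ) : pentagonal (j + 1) = pentagonal (-j) + (2 * j + 1) := by
  have h₁ := two_mul_natCast_pentagonal (j + 1)
  have h₂ := two_mul_natCast_pentagonal_neg j
  zify
  linarith

lemma one_sub_mul_kontsevichZagierSum_eq_sum_pentagonal {q x : R} {N : ℕ}
    (h : ∀ a, qPochhammer (x * q ^ a) q (N + 1) = 0) (m : ℕ) :
    (1 - x) * kontsevichZagierSum q N x =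
      ∑ j ∈ range m, (-1) ^ j * (x ^ (3 * j) * q ^ pentagonal (-j)
        - x ^ (3 * j + 2) * q ^ pentagonal (j + 1))
      + (-1) ^ m * x ^ (3 * m) * q ^ pentagonal (-m) *
        ((1 - x * q ^ m) * kontsevichZagierSum q N (x * q ^ m)) := by
  induction m with
  | zero => simp [pentagonal]
  | succ m ih =>
    have hstep : qPochhammer (x * q ^ m * q) q (N + 1) = 0 := by
      rw [mul_assoc, ← pow_succ]; exact h (m + 1)
    rw [ih, one_sub_mul_kontsevichZagierSum hstep, sum_range_succ, pentagonal_neg_add_one,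
      pentagonal_add_one, mul_assoc x, ← pow_succ]
    ring

end KontsevichZagierSum

section Functional

variable {R T W : Type*} [CommRing R] [CommRing T] [Algebra R T] [AddCommGroup W] [Module R W]
  {q : T} {x w : R} {N L M : ℕ} {ℓ : T →ₗ[R] W}

lemma map_one_sub_mul_kontsevichZagierSum (hℓ : ∀ k, ℓ (q ^ pentagonal k) = 0)
    (h : ∀ a, qPochhammer (algebraMap R T x * q ^ a) q (N + 1) = 0) (m : ℕ) :
    ℓ ((1 - algebraMap R T x) * kontsevichZagierSum q N (algebraMap R T x)) =
      ((-1) ^ m * x ^ (3 * m)) • ℓ (q ^ pentagonal (-m) * ((1 - algebraMap R T x * q ^ m) *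
        kontsevichZagierSum q N (algebraMap R T x * q ^ m))) := by
  have hterm (j : ℕ) : ℓ ((-1) ^ j * (algebraMap R T x ^ (3 * j) * q ^ pentagonal (-j)
      - algebraMap R T x ^ (3 * j + 2) * q ^ pentagonal (j + 1))) = 0 := by
    have hsmul : (-1) ^ j * (algebraMap R T x ^ (3 * j) * q ^ pentagonal (-j)
        - algebraMap R T x ^ (3 * j + 2) * q ^ pentagonal (j + 1)) =
        ((-1) ^ j : R) • (x ^ (3 * j) • q ^ pentagonal (-j)
          - x ^ (3 * j + 2) • q ^ pentagonal (j + 1)) := by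
      simp [Algebra.smul_def]
    rw [hsmul, map_smul, map_sub, map_smul, map_smul, hℓ, hℓ, smul_zero, smul_zero, sub_zero,
      smul_zero]
  rw [one_sub_mul_kontsevichZagierSum_eq_sum_pentagonal h m, map_add, map_sum,
    sum_eq_zero fun j _ ↦ hterm j, zero_add, ← map_smul]
  congr 1
  simp [Algebra.smul_def, mul_assoc]

lemma pentagonal_neg_two_mul (L B : ℕ) :
    pentagonal (-(2 * L * B : ℕ)) = L * (B + 6 * L * B ^ 2) := by
  have h := two_mul_natCast_pentagonal_neg (2 * L * B : ℕ)
  push_cast at h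
  zify
  linarith

lemma exists_forall_pow_smul_sum_eq (hℓ : ∀ k, ℓ (q ^ pentagonal k) = 0)
    (hq : q ^ L = algebraMap R T w)
    (h : ∀ a, qPochhammer (algebraMap R T x * q ^ a) q (N + 1) = 0) :
    ∃ (d : ℕ) (c : ℕ → W), ∀ B : ℕ, (x ^ (6 * L)) ^ B •
        ∑ j ∈ range d, w ^ ((2 * j + 1) * B + 6 * L * B ^ 2) • c j =
      ℓ ((1 - algebraMap R T x) * kontsevichZagierSum q N (algebraMap R T x)) := by
  set P : T[X] := (1 - X) * kontsevichZagierSum (C q) N X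
  have hP (y : T) : (1 - y) * kontsevichZagierSum q N y = P.eval y := by
    simp [P, eval_kontsevichZagierSum]
  refine ⟨P.natDegree + 1, fun j ↦ x ^ j • ℓ (P.coeff j), fun B ↦ ?_⟩
  -- After `2LB` steps every power of `q` in the remainder is a power of `w`, and the sign is `+1`.
  have hpent : q ^ pentagonal (-(2 * L * B : ℕ)) = algebraMap R T (w ^ (B + 6 * L * B ^ 2)) := by
    rw [pentagonal_neg_two_mul, pow_mul, hq, map_pow]
  have hpow : q ^ (2 * L * B) = algebraMap R T (w ^ (2 * B)) := by
    rw [mul_comm 2 L, mul_assoc, pow_mul, hq, map_pow]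
  have hsign : (-1 : R) ^ (2 * L * B) = 1 := by rw [mul_assoc, pow_mul, neg_one_sq, one_pow]
  have heval : P.eval (algebraMap R T (x * w ^ (2 * B))) =
      ∑ j ∈ range (P.natDegree + 1), (x * w ^ (2 * B)) ^ j • P.coeff j := by
    simp only [eval_eq_sum_range, Algebra.smul_def, map_pow, mul_comm]
  rw [map_one_sub_mul_kontsevichZagierSum hℓ h (2 * L * B), hP, hpent, hpow, hsign, ← map_mul,
    heval, ← Algebra.smul_def, map_smul, map_sum, one_mul, smul_sum, smul_sum, smul_sum]
  refine sum_congr rfl fun j _ ↦ ?_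
  simp only [map_smul, smul_smul]
  congr 1
  ring

lemma one_sub_pow_smul_map_eq_zero (hℓ : ∀ k, ℓ (q ^ pentagonal k) = 0)
    (hq : q ^ L = algebraMap R T w) (hw : (w - 1) ^ M = 0)
    (h : ∀ a, qPochhammer (algebraMap R T x * q ^ a) q (N + 1) = 0) :
    (1 - x ^ (6 * L)) ^ (2 * M + 1) •
      ℓ ((1 - algebraMap R T x) * kontsevichZagierSum q N (algebraMap R T x)) = 0 := by
  obtain ⟨d, c, hc⟩ := exists_forall_pow_smul_sum_eq hℓ hq h
  rw [← pow_smul_fwdDiff_iter hc (2 * M + 1) 0]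
  have hvanish : (Δ_[1])^[2 * M + 1]
      (∑ j ∈ range d, fun B ↦ w ^ ((2 * j + 1) * B + 6 * L * B ^ 2) • c j) = 0 := by
    rw [fwdDiff_iter_finsetSum]
    refine sum_eq_zero fun j _ ↦ ?_
    set Q : ℚ[X] := C (2 * j + 1 : ℚ) * X + C (6 * L : ℚ) * X ^ 2
    have hQ : Q.natDegree ≤ 2 := by simp only [Q]; compute_degree
    exact fwdDiff_iter_pow_smul_eq_zero hw (Q := Q) (by simp [Q])
      (Nat.lt_succ_of_le (Nat.mul_le_mul_right M hQ)) (c j)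
  rw [← Finset.sum_fn, hvanish, Pi.zero_apply, smul_zero]

lemma pow_mul_eq_pow_mul_of_dvd_sub {z a b : R} {e : ℕ} (hz : z ^ (e + 1) = 0) (h : z ∣ a - b) :
    z ^ e * a = z ^ e * b := by
  obtain ⟨t, ht⟩ := h
  rw [← sub_eq_zero, ← mul_sub, ht, ← mul_assoc, ← pow_succ, hz, zero_mul]

lemma dvd_geom_sum_pow_sub (z : R) (D n : ℕ) :
    z ∣ (D : R) ^ n - (∑ k ∈ range D, (1 - z) ^ k) ^ n := by
  have h := sub_dvd_eval_sub 1 (1 - z) (∑ k ∈ range D, X ^ k)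
  refine dvd_trans ?_ (sub_dvd_pow_sub_pow _ _ _)
  simpa [eval_finsetSum] using h

lemma pow_mul_smul_map_sum_qPochhammer_eq_zero {z : R} (hz : z ^ (2 * M + 3) = 0)
    (hℓ : ∀ k, ℓ (q ^ pentagonal k) = 0) (hL : 0 < L) (hq : q ^ L = algebraMap R T w)
    (hw : (w - 1) ^ M = 0) (hN : L * (2 * M + 3 + M) ≤ N) :
    (z ^ (2 * M + 2) * ((6 * L : ℕ) : R) ^ (2 * M + 1)) •
      ℓ (∑ n ∈ range (N + 1), qPochhammer q q n) = 0 := by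
  set x := 1 - z
  set S := ∑ k ∈ range (6 * L), x ^ k
  set F := kontsevichZagierSum q N
  have hx : 1 - algebraMap R T x = algebraMap R T z := by
    rw [← map_one (algebraMap R T), ← map_sub, sub_sub_cancel]
  have hzT : algebraMap R T z ^ (2 * M + 3) = 0 := by rw [← map_pow, hz, map_zero]
  have hwT : (q ^ L - 1) ^ M = 0 := by
    rw [hq, ← map_one (algebraMap R T), ← map_sub, ← map_pow, hw, map_zero]
  have hvanish (a : ℕ) : qPochhammer (algebraMap R T x * q ^ a) q (N + 1) = 0 :=
    qPochhammer_eq_zero_of_le (qPochhammer_mul_pow_eq_zero hL (hx ▸ hzT) hwT a)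
      (Nat.le_succ_of_le hN)
  have hgeom : 1 - x ^ (6 * L) = z * S := by
    rw [← mul_neg_geom_sum, sub_sub_cancel]
  have hS : z ^ (2 * M + 2) * ((6 * L : ℕ) : R) ^ (2 * M + 1) =
      z ^ (2 * M + 2) * S ^ (2 * M + 1) :=
    pow_mul_eq_pow_mul_of_dvd_sub hz (dvd_geom_sum_pow_sub z (6 * L) (2 * M + 1))
  have hF : z ^ (2 * M + 2) • F 1 = z ^ (2 * M + 2) • F (algebraMap R T x) := by
    simp only [Algebra.smul_def, map_pow]
    exact pow_mul_eq_pow_mul_of_dvd_sub hzT (hx ▸ sub_dvd_kontsevichZagierSum_sub q N 1 _)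
  calc _ = S ^ (2 * M + 1) • ℓ (z ^ (2 * M + 2) • F 1) := by
        rw [hS, ← kontsevichZagierSum_one, map_smul, smul_smul, mul_comm]
    _ = (1 - x ^ (6 * L)) ^ (2 * M + 1) • ℓ ((1 - algebraMap R T x) * F (algebraMap R T x)) := by
        rw [hF, hx, hgeom, ← Algebra.smul_def, map_smul, map_smul, smul_smul, smul_smul]
        congr 1
        ring
    _ = 0 := one_sub_pow_smul_map_eq_zero hℓ hq hw hvanish

end Functional

section Dissection

variable {R : Type*} [CommRing R]

/-- The `R`-linear map sending an element of `R[X] / (X^s - v)` to the `i`-th coefficient of its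
representative of degree less than `s`. It extracts the `i`-th component of the `s`-dissection. -/
noncomputable def rootCoeff (v : R) {s : ℕ} (hs : s ≠ 0) (i : ℕ) :
    AdjoinRoot (X ^ s - C v) →ₗ[R] R :=
  lcoeff R i ∘ₗ AdjoinRoot.modByMonicHom (monic_X_pow_sub_C v hs)

lemma root_pow_eq_algebraMap (v : R) (s : ℕ) :
    AdjoinRoot.root (X ^ s - C v) ^ s = algebraMap R _ v := by
  have h := AdjoinRoot.eval₂_root (X ^ s - C v)
  rwa [eval₂_sub, eval₂_X_pow, eval₂_C, sub_eq_zero] at h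

lemma rootCoeff_root_pow (v : R) {s i : ℕ} (hs : s ≠ 0) (n : ℕ) :
    rootCoeff v hs i (AdjoinRoot.root (X ^ s - C v) ^ n) =
      if n % s = i then v ^ (n / s) else 0 := by
  nontriviality R
  have hmod : (X ^ (n % s) : R[X]) %ₘ (X ^ s - C v) = X ^ (n % s) := by
    rw [modByMonic_eq_self_iff (monic_X_pow_sub_C v hs), degree_X_pow,
      degree_X_pow_sub_C (Nat.pos_of_ne_zero hs)]
    exact_mod_cast Nat.mod_lt n (Nat.pos_of_ne_zero hs)
  have hpow : AdjoinRoot.root (X ^ s - C v) ^ n =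
      v ^ (n / s) • AdjoinRoot.mk (X ^ s - C v) (X ^ (n % s)) := by
    conv_lhs => rw [← Nat.div_add_mod n s, pow_add, pow_mul, root_pow_eq_algebraMap]
    rw [map_pow, AdjoinRoot.mk_X, Algebra.smul_def, map_pow]
  rw [hpow, map_smul, rootCoeff, LinearMap.comp_apply, AdjoinRoot.modByMonicHom_mk, hmod,
    lcoeff_apply, coeff_X_pow, smul_eq_mul, mul_ite, mul_one, mul_zero]
  simp only [eq_comm]

lemma map_comp_X_pow_eq_algebraMap {T : Type*} [CommRing T] [Algebra R T] {s : ℕ}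
    {φ : ℤ[X] →+* R} {ψ : ℤ[X] →+* T} (hψ : ψ X ^ s = algebraMap R T (φ X)) (p : ℤ[X]) :
    ψ (p.comp (X ^ s)) = algebraMap R T (φ p) := by
  have h : ψ.comp (compRingHom (X ^ s)) = (algebraMap R T).comp φ :=
    ringHom_ext' (Subsingleton.elim _ _) (by simpa using hψ)
  exact RingHom.congr_fun h p

lemma rootCoeff_map_dissection {φ : ℤ[X] →+* R} {s i : ℕ} (hs : s ≠ 0) (hi : i < s)
    {ψ : ℤ[X] →+* AdjoinRoot (X ^ s - C (φ X))} (hψ : ψ X = AdjoinRoot.root _) (A : ℕ → ℤ[X]) :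
    rootCoeff (φ X) hs i (ψ (∑ j ∈ range s, X ^ j * (A j).comp (X ^ s))) = φ (A i) := by
  have hterm (j : ℕ) (hj : j ∈ range s) :
      rootCoeff (φ X) hs i (ψ (X ^ j * (A j).comp (X ^ s))) = if j = i then φ (A j) else 0 := by
    have hjs := mem_range.1 hj
    rw [map_mul, map_comp_X_pow_eq_algebraMap (hψ ▸ root_pow_eq_algebraMap (φ X) s), map_pow, hψ,
      mul_comm, ← Algebra.smul_def, map_smul, rootCoeff_root_pow, Nat.mod_eq_of_lt hjs,
      Nat.div_eq_of_lt hjs, pow_zero, smul_eq_mul, mul_ite, mul_one, mul_zero]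
  rw [map_sum, map_sum, sum_congr rfl hterm, sum_ite_eq', if_pos (mem_range.2 hi)]

variable {φ : ℤ[X] →+* R} {s N M i : ℕ} {A : ℕ → ℤ[X]}

lemma pow_mul_map_dissection_eq_zero {z : R} (hs : s ≠ 0) (hi : i < s)
    (hpent : ∀ k, pentagonal k % s ≠ i) (hφ : φ (qPoch M) = 0) (hM : s * M ≤ N + 1)
    (hz : z ^ (2 * M + 3) = 0)
    (hdiss : ∑ n ∈ range (N + 1), qPoch n = ∑ j ∈ range s, X ^ j * (A j).comp (X ^ s)) :
    z ^ (2 * M + 2) * ((6 * (s * M.factorial) : ℕ) : R) ^ (2 * M + 1) * φ (A i) = 0 := by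
  set v := φ X
  set q := AdjoinRoot.root (X ^ s - C v)
  set ψ := eval₂RingHom (Int.castRingHom _) q
  have hψ : ψ X = q := eval₂_X _ _
  have hqs : q ^ s = algebraMap R _ v := root_pow_eq_algebraMap v s
  have hv : qPochhammer v v M = 0 := by rw [← map_qPoch, hφ]
  have hq : qPochhammer q q (s * M) = 0 := by
    have h := qPochhammer_pow_dvd q (Nat.pos_of_ne_zero hs) M
    rwa [hqs, ← map_qPochhammer, hv, map_zero, zero_dvd_iff] at h
  have hℓ (k : ℤ) : rootCoeff v hs i (q ^ pentagonal k) = 0 := by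
    rw [rootCoeff_root_pow, if_neg (hpent k)]
  have hqL : q ^ (s * M.factorial) = algebraMap R _ (v ^ M.factorial) := by
    rw [pow_mul, hqs, map_pow]
  set K := s * M.factorial * (2 * M + 3 + M) + N
  have hsum : ∑ n ∈ range (K + 1), qPochhammer q q n =
      ψ (∑ j ∈ range s, X ^ j * (A j).comp (X ^ s)) := by
    simp only [← hdiss, map_sum, map_qPoch, hψ]
    exact eventually_constant_sum (fun n hn ↦ qPochhammer_eq_zero_of_le hq (hM.trans hn)) (by lia)
  have h := pow_mul_smul_map_sum_qPochhammer_eq_zero (N := K) hz hℓ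
    (Nat.mul_pos (Nat.pos_of_ne_zero hs) M.factorial_pos) hqL
    (pow_factorial_sub_one_pow_eq_zero hv) (Nat.le_add_right _ _)
  rwa [hsum, rootCoeff_map_dissection hs hi hψ, smul_eq_mul] at h

lemma eq_zero_of_root_pow_mul_algebraMap_eq_zero {e : ℕ} {a : R}
    (h : AdjoinRoot.root (X ^ (e + 1) : R[X]) ^ e * algebraMap R _ a = 0) : a = 0 := by
  have hmk : AdjoinRoot.mk (X ^ (e + 1) : R[X]) (X ^ e * C a) = 0 := by
    rwa [map_mul, map_pow, AdjoinRoot.mk_X, AdjoinRoot.mk_C]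
  have hcoeff := X_pow_dvd_iff.1 (AdjoinRoot.mk_eq_zero.1 hmk) e e.lt_succ_self
  simpa using hcoeff

lemma natCast_mul_map_dissection_eq_zero (hs : s ≠ 0) (hi : i < s)
    (hpent : ∀ k, pentagonal k % s ≠ i) (hφ : φ (qPoch M) = 0) (hM : s * M ≤ N + 1)
    (hdiss : ∑ n ∈ range (N + 1), qPoch n = ∑ j ∈ range s, X ^ j * (A j).comp (X ^ s)) :
    (((6 * (s * M.factorial)) ^ (2 * M + 1) : ℕ) : R) * φ (A i) = 0 := by
  set f : R[X] := X ^ (2 * M + 2 + 1)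
  have hz : AdjoinRoot.root f ^ (2 * M + 3) = 0 := by
    rw [← AdjoinRoot.mk_X, ← map_pow, AdjoinRoot.mk_self]
  have hφf : (algebraMap R (AdjoinRoot f)).comp φ (qPoch M) = 0 := by
    rw [RingHom.comp_apply, hφ, map_zero]
  have h := pow_mul_map_dissection_eq_zero hs hi hpent hφf hM hz hdiss
  refine eq_zero_of_root_pow_mul_algebraMap_eq_zero (e := 2 * M + 2) ?_
  rwa [map_mul, map_natCast, Nat.cast_pow, ← mul_assoc]

end Dissection

section PrimitivePolynomial

lemma isPrimitive_qPoch (n : ℕ) : (qPoch n).IsPrimitive := by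
  refine isPrimitive_iff_isUnit_of_C_dvd.2 fun r hr ↦ ?_
  have h := eval_dvd (x := 0) hr
  rw [eval_C] at h
  exact isUnit_of_dvd_one (by simpa [qPoch, eval_prod] using h)

lemma dvd_of_dvd_C_mul {R : Type*} [CommRing R] [IsDomain R] [NormalizedGCDMonoid R]
    {f g : R[X]} (hg : g.IsPrimitive) {c : R} (hc : c ≠ 0) (h : g ∣ C c * f) : g ∣ f := by
  have hunit : IsUnit (C (algebraMap R (FractionRing R) c)) :=
    isUnit_C.2 (IsFractionRing.to_map_ne_zero_of_mem_nonZeroDivisors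
      (mem_nonZeroDivisors_of_ne_zero hc)).isUnit
  refine hg.dvd_of_fraction_map_dvd_fraction_map (K := FractionRing R) (hunit.dvd_mul_left.1 ?_)
  simpa using Polynomial.map_dvd (algebraMap R (FractionRing R)) h

end PrimitivePolynomial

theorem kontsevich_zagier_dissection_divisibility
    (s N : ℕ) (hs : 1 ≤ s) (hN : 1 ≤ N) (i : ℕ) (hi : i < s)
    (hpent : ¬ ∃ m : ℤ, (m * (3 * m + 1)) / 2 ≡ (i : ℤ) [ZMOD (s : ℤ)])
    (A : ℕ → ℤ[X])
    (hdiss : ∑ n ∈ Finset.range (N + 1), qPoch n =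
      ∑ j ∈ Finset.range s, X ^ j * (A j).comp (X ^ s)) :
    qPoch ((N + 1) / s) ∣ A i := by
  set M := (N + 1) / s
  have hresidue (k : ℤ) : pentagonal k % s ≠ i := by
    rintro rfl
    refine hpent ⟨-k, ?_⟩
    rw [show -k * (3 * -k + 1) = k * (3 * k - 1) by ring, ← natCast_pentagonal, Int.natCast_mod]
    exact (Int.mod_modEq _ _).symm
  have hmul := natCast_mul_map_dissection_eq_zero (φ := AdjoinRoot.mk (qPoch M))
    (Nat.ne_of_gt hs) hi hresidue AdjoinRoot.mk_self (Nat.mul_div_le _ _) hdiss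
  have hD : (((6 * (s * M.factorial)) ^ (2 * M + 1) : ℕ) : ℤ) ≠ 0 := by positivity
  refine dvd_of_dvd_C_mul (isPrimitive_qPoch M) hD (AdjoinRoot.mk_eq_zero.1 ?_)
  rwa [map_natCast C, map_mul, map_natCast]
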